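/- Let p be a prime. The number of quadruples (a, b, c, d) of integers satisfying 1 ≤ a ≤ p, 1 ≤ b ≤ p, 1 ≤ c ≤ min(a, b), 1 ≤ d ≤ min(a, b), and a + b ≤ c + d + p − 1 equals p(p+1)(p²+p+2)/8. -/

import Mathlib

/-!
Fix `a, b ≤ p` and put `m = min a b`, `n = a + b - p`, so that `n ≤ m`. Among the `m ^ 2` pairs
`(c, d)`, those violating `a + b ≤ c + d + p - 1` are the pairs of positive integers with
`c + d ≤ n`; there are `n.choose 2` of them. Applying the hockey-stick identity to `a` and to `b`
shows that these violations add up to `(p + 2).choose 4`, so the count is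
`∑ a, ∑ b, (min a b) ^ 2 - (p + 2).choose 4`.
-/

open Finset

section Pairs

variable {m n : ℕ}

theorem card_pairs_add_le (h : n ≤ m + 1) :
    #{x ∈ Icc 1 m ×ˢ Icc 1 m | x.1 + x.2 ≤ n} = n.choose 2 := by
  calc #{x ∈ Icc 1 m ×ˢ Icc 1 m | x.1 + x.2 ≤ n}
    _ = #((range n).sigma range) := by
      refine card_nbij' (fun x ↦ ⟨n - x.1, x.2 - 1⟩) (fun y ↦ (n - y.1, y.2 + 1)) ?_ ?_ ?_ ?_
      all_goals grind [Set.MapsTo, Set.LeftInvOn]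
    _ = n.choose 2 := by simp [card_sigma, sum_range_id, Nat.choose_two_right]

theorem card_pairs_lt_add_add_choose_two (h : n ≤ m + 1) :
    #{x ∈ Icc 1 m ×ˢ Icc 1 m | n < x.1 + x.2} + n.choose 2 = m ^ 2 := by
  rw [← card_pairs_add_le h]
  simpa [sq] using
    card_filter_add_card_filter_not (s := Icc 1 m ×ˢ Icc 1 m) (fun x ↦ n < x.1 + x.2)

end Pairs

theorem sum_Icc_choose_add_sub {k q r : ℕ} (h : r ≤ q + k) (n : ℕ) :
    ∑ i ∈ Icc 1 n, (i + r - q).choose (k + 1) = (n + 1 + r - q).choose (k + 2) := by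
  induction n with
  | zero => exact (Nat.choose_eq_zero_of_lt (by omega)).symm
  | succ n ih =>
    rw [sum_Icc_succ_top (by omega), ih]
    rcases le_or_gt q (n + 1 + r) with hq | hq
    · rw [show n + 1 + 1 + r - q = n + 1 + r - q + 1 by omega, Nat.choose_succ_succ', add_comm]
    · rw [Nat.sub_eq_zero_of_le hq.le, Nat.sub_eq_zero_of_le (by omega)]
      simp

theorem sum_sum_Icc_choose_add_sub (p k : ℕ) :
    ∑ a ∈ Icc 1 p, ∑ b ∈ Icc 1 p, (a + b - p).choose (k + 1) = (p + 2).choose (k + 3) := by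
  calc ∑ a ∈ Icc 1 p, ∑ b ∈ Icc 1 p, (a + b - p).choose (k + 1)
    _ = ∑ a ∈ Icc 1 p, (a + 1).choose (k + 2) := by
      refine sum_congr rfl fun a ha ↦ ?_
      have hap : a ≤ p + k := by grind
      simp only [add_comm a, sum_Icc_choose_add_sub hap]
      congr 1
      omega
    _ = (p + 2).choose (k + 3) :=
      sum_Icc_choose_add_sub (k := k + 1) (q := 0) (r := 1) (by omega) p

theorem sum_sum_Icc_min_succ {M : Type*} [AddCommMonoid M] (f : ℕ → M) (n : ℕ) :
    ∑ a ∈ Icc 1 (n + 1), ∑ b ∈ Icc 1 (n + 1), f (min a b) =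
      ∑ a ∈ Icc 1 n, ∑ b ∈ Icc 1 n, f (min a b) + 2 • ∑ a ∈ Icc 1 n, f a + f (n + 1) := by
  have row : ∑ b ∈ Icc 1 n, f (min (n + 1) b) = ∑ b ∈ Icc 1 n, f b :=
    sum_congr rfl fun b hb ↦ by rw [min_eq_right (by grind)]
  have column : ∑ a ∈ Icc 1 n, f (min a (n + 1)) = ∑ a ∈ Icc 1 n, f a := by
    simpa only [min_comm] using row
  simp only [sum_Icc_succ_top (Nat.le_add_left 1 n), sum_add_distrib, row, column, min_self,
    two_nsmul, add_assoc]

theorem six_mul_sum_Icc_sq (n : ℕ) :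
    6 * ∑ i ∈ Icc 1 n, i ^ 2 = n * (n + 1) * (2 * n + 1) := by
  induction n with
  | zero => rfl
  | succ n ih => rw [sum_Icc_succ_top (by omega), mul_add, ih]; ring

theorem six_mul_sum_sum_Icc_min_sq (n : ℕ) :
    6 * ∑ a ∈ Icc 1 n, ∑ b ∈ Icc 1 n, min a b ^ 2 = n * (n + 1) * (n ^ 2 + n + 1) := by
  induction n with
  | zero => rfl
  | succ n ih =>
    rw [sum_sum_Icc_min_succ (· ^ 2), smul_eq_mul]
    linear_combination ih + 2 * six_mul_sum_Icc_sq n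

theorem twenty_four_mul_choose_four (n : ℕ) :
    24 * (n + 2).choose 4 = (n + 2) * (n + 1) * n * (n - 1) := by
  calc 24 * (n + 2).choose 4
    _ = (n + 2).descFactorial 4 := (Nat.descFactorial_eq_factorial_mul_choose (n + 2) 4).symm
    _ = (n + 2) * (n + 1) * n * (n - 1) := by
      simp only [Nat.descFactorial, Nat.add_sub_cancel, Nat.add_one_sub_one,
        Nat.reduceSubDiff, tsub_zero]
      ring

/-- The quadruples `(a, b, c, d)` counted in the theorem, encoded as nested pairs
`(a, (b, (c, d)))`; the bound `c, d ≤ p` is implied by `c, d ≤ min a b` and makes the set finite. -/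
def admissibleQuadruples (p : ℕ) : Finset (ℕ × ℕ × ℕ × ℕ) :=
  {x ∈ Icc 1 p ×ˢ Icc 1 p ×ˢ Icc 1 p ×ˢ Icc 1 p |
    x.2.2.1 ≤ min x.1 x.2.1 ∧ x.2.2.2 ≤ min x.1 x.2.1 ∧
      x.1 + x.2.1 ≤ x.2.2.1 + x.2.2.2 + p - 1}

theorem card_admissibleQuadruples_eq_sum_card_pairs (p : ℕ) :
    #(admissibleQuadruples p) =
      ∑ a ∈ Icc 1 p, ∑ b ∈ Icc 1 p,
        #{y ∈ Icc 1 (min a b) ×ˢ Icc 1 (min a b) | a + b - p < y.1 + y.2} := by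
  rw [admissibleQuadruples, card_filter, sum_product]
  refine sum_congr rfl fun a ha ↦ ?_
  rw [sum_product]
  refine sum_congr rfl fun b hb ↦ ?_
  rw [← card_filter]
  congr 1
  ext ⟨c, d⟩
  simp only [mem_filter, mem_product, mem_Icc] at ha hb ⊢
  omega

theorem card_admissibleQuadruples_add_choose_four (p : ℕ) :
    #(admissibleQuadruples p) + (p + 2).choose 4 =
      ∑ a ∈ Icc 1 p, ∑ b ∈ Icc 1 p, min a b ^ 2 := by
  rw [card_admissibleQuadruples_eq_sum_card_pairs, ← sum_sum_Icc_choose_add_sub p 1]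
  simp only [← sum_add_distrib]
  refine sum_congr rfl fun a ha ↦ sum_congr rfl fun b hb ↦ card_pairs_lt_add_add_choose_two ?_
  grind

theorem stmt_4_general (p : ℕ) :
    ((Finset.Icc 1 p ×ˢ Finset.Icc 1 p ×ˢ Finset.Icc 1 p ×ˢ Finset.Icc 1 p).filter
      (fun x : ℕ × ℕ × ℕ × ℕ =>
        x.2.2.1 ≤ min x.1 x.2.1 ∧ x.2.2.2 ≤ min x.1 x.2.1 ∧
        x.1 + x.2.1 ≤ x.2.2.1 + x.2.2.2 + p - 1)).card
    = p * (p + 1) * (p ^ 2 + p + 2) / 8 := by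
  have hcount := card_admissibleQuadruples_add_choose_four p
  have hmin := six_mul_sum_sum_Icc_min_sq p
  have hchoose : 24 * (p + 2).choose 4 + (p + 2) * (p + 1) * p = (p + 2) * (p + 1) * p ^ 2 := by
    rw [twenty_four_mul_choose_four]
    cases p with
    | zero => rfl
    | succ q => rw [Nat.add_sub_cancel]; ring
  change #(admissibleQuadruples p) = _
  refine (Nat.div_eq_of_eq_mul_right (by norm_num) ?_).symm
  linarith

/-- Lemma A.1: the number of quadruples `(a, b, c, d)` with `1 ≤ a, b ≤ p`,
`1 ≤ c, d ≤ min(a, b)` and `a + b ≤ c + d + p − 1` equals `p(p+1)(p²+p+2)/8`. -/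
theorem stmt_4 (p : ℕ) (hp : p.Prime) :
    ((Finset.Icc 1 p ×ˢ Finset.Icc 1 p ×ˢ Finset.Icc 1 p ×ˢ Finset.Icc 1 p).filter
      (fun x : ℕ × ℕ × ℕ × ℕ =>
        x.2.2.1 ≤ min x.1 x.2.1 ∧ x.2.2.2 ≤ min x.1 x.2.1 ∧
        x.1 + x.2.1 ≤ x.2.2.1 + x.2.2.2 + p - 1)).card
    = p * (p + 1) * (p ^ 2 + p + 2) / 8 :=
  stmt_4_general p
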